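/- arXiv:2503.10402 — 2 statements merged into one kernel-verified Lean document; each statement's English description precedes it below -/
import Mathlib

section
/- Let f : ℝ → ℝ be twice continuously differentiable, let x* be a simple root of f (i.e. f(x*) = 0 and f'(x*) ≠ 0), and let g : ℝ → ℝ be continuously differentiable with g(0) = 0 and g'(0) ≠ 0. Let v be the modified Steffensen iteration map v(x) = x − f(x)/h(x) with h(x) = (f(x + g(f(x))) − f(x)) / g(f(x)), extended by v(x*) = x*. Then the iteration is locally convergent of order two: there exist δ > 0 and C > 0 such that for every initial point x₀ with |x₀ − x*| < δ, the sequence defined by x_{n+1} = v(x_n) is well defined, remains in the ball |x − x*| < δ, converges to x*, and satisfies |x_{n+1} − x*| ≤ C |x_n − x*|² for all n. -/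
open Filter Topology

/-!
If `f'` is Lipschitz at the root `a`, the mean value inequality applied to `f - f'(a) · id` gives
`f y - f x = f'(a) (y - x) + O(max |x - a| |y - a|) |y - x|` near `(a, a)`. Taking
`y = x + g (f x)`, where `g (f x) = O(x - a)`, shows that the divided difference is
`h x = f'(a) + O(x - a)`; taking instead `a` for one of the two points gives
`f x = f'(a) (x - a) + O((x - a)²)`. Hence
`v x - a = ((h x - f'(a)) (x - a) - (f x - f'(a) (x - a))) / h x = O((x - a)²)`,
and on a small enough ball around `a` such a map is a contraction towards `a`.
-/

open Asymptotics Metric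

section Contraction

variable {E : Type*} [PseudoMetricSpace E] {v : E → E} {a : E} {q δ : ℝ} {u : ℕ → E}

lemma mem_ball_of_dist_le_mul (hq : q ≤ 1)
    (hv : ∀ x ∈ ball a δ, dist (v x) a ≤ q * dist x a) (hu₀ : u 0 ∈ ball a δ)
    (hu : ∀ n, u (n + 1) = v (u n)) (n : ℕ) : u n ∈ ball a δ := by
  induction n with
  | zero => exact hu₀
  | succ n hn =>
    calc dist (u (n + 1)) a ≤ q * dist (u n) a := hu n ▸ hv _ hn
      _ ≤ dist (u n) a := mul_le_of_le_one_left dist_nonneg hq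
      _ < δ := hn

lemma tendsto_of_dist_le_mul (hq₀ : 0 ≤ q) (hq : q < 1)
    (hv : ∀ x ∈ ball a δ, dist (v x) a ≤ q * dist x a) (hu₀ : u 0 ∈ ball a δ)
    (hu : ∀ n, u (n + 1) = v (u n)) : Tendsto u atTop (𝓝 a) := by
  have hgeom (n : ℕ) : dist (u n) a ≤ q ^ n * dist (u 0) a :=
    le_geom (u := fun n ↦ dist (u n) a) hq₀ n fun k _ ↦
      hu k ▸ hv _ (mem_ball_of_dist_le_mul hq.le hv hu₀ hu k)
  refine tendsto_iff_dist_tendsto_zero.2 (squeeze_zero (fun _ ↦ dist_nonneg) hgeom ?_)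
  simpa only [zero_mul] using
    (tendsto_pow_atTop_nhds_zero_of_lt_one hq₀ hq).mul_const (dist (u 0) a)

end Contraction

lemma exists_eventually_orbit_quadratic_convergence {E : Type*} [SeminormedAddCommGroup E]
    {v : E → E} {a : E} (hv : (fun x ↦ v x - a) =O[𝓝 a] fun x ↦ ‖x - a‖ ^ 2) :
    ∃ C > 0, ∀ᶠ δ : ℝ in 𝓝[>] 0, ∀ u : ℕ → E, ‖u 0 - a‖ < δ → (∀ n, u (n + 1) = v (u n)) →
      (∀ n, ‖u n - a‖ < δ) ∧ Tendsto u atTop (𝓝 a) ∧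
      ∀ n, ‖u (n + 1) - a‖ ≤ C * ‖u n - a‖ ^ 2 := by
  obtain ⟨C, hC, hCv⟩ := hv.exists_pos
  have hsmall : ∀ᶠ δ : ℝ in 𝓝 0, C * δ < 1 :=
    (continuous_const_mul C).continuousAt.eventually_lt_const (by simp)
  refine ⟨C, hC, ?_⟩
  filter_upwards [self_mem_nhdsWithin, nhdsWithin_le_nhds hsmall,
    nhdsWithin_le_nhds (eventually_ball_subset hCv.bound)] with δ hδ hCδ hball u hu₀ hu
  have hquad : ∀ x ∈ ball a δ, ‖v x - a‖ ≤ C * ‖x - a‖ ^ 2 := fun x hx ↦ by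
    simpa using hball hx
  have hcontr : ∀ x ∈ ball a δ, dist (v x) a ≤ C * δ * dist x a := fun x hx ↦ by
    rw [dist_eq_norm, dist_eq_norm]
    calc ‖v x - a‖ ≤ C * ‖x - a‖ * ‖x - a‖ := (hquad x hx).trans_eq (by ring)
      _ ≤ C * δ * ‖x - a‖ := by gcongr; exact (mem_ball_iff_norm.1 hx).le
  have hmem := mem_ball_of_dist_le_mul hCδ.le hcontr (mem_ball_iff_norm.2 hu₀) hu
  exact ⟨fun n ↦ mem_ball_iff_norm.1 (hmem n),
    tendsto_of_dist_le_mul (mul_pos hC hδ).le hCδ hcontr (hmem 0) hu,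
    fun n ↦ hu n ▸ hquad _ (hmem n)⟩

lemma isBigO_sub_sub_fderiv {𝕜 E F : Type*} [RCLike 𝕜]
    [NormedAddCommGroup E] [NormedSpace 𝕜 E] [NormedAddCommGroup F] [NormedSpace 𝕜 F]
    {f : E → F} {a : E} (hf : ∀ᶠ x in 𝓝 a, DifferentiableAt 𝕜 f x)
    (hf' : (fun x ↦ fderiv 𝕜 f x - fderiv 𝕜 f a) =O[𝓝 a] fun x ↦ x - a) :
    (fun p : E × E ↦ f p.1 - f p.2 - fderiv 𝕜 f a (p.1 - p.2)) =O[𝓝 (a, a)]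
      fun p ↦ ‖p - (a, a)‖ * ‖p.1 - p.2‖ := by
  let : NormedSpace ℝ E := .restrictScalars ℝ 𝕜 E
  obtain ⟨K, hK, hKf⟩ := hf'.exists_pos
  obtain ⟨ε, hε, hball⟩ := Metric.eventually_nhds_iff_ball.1 (hf.and hKf.bound)
  refine .of_bound K ?_
  filter_upwards [ball_mem_nhds (a, a) hε] with p hp
  set ρ := ‖p - (a, a)‖
  have hsub : closedBall a ρ ⊆ ball a ε := closedBall_subset_ball (mem_ball_iff_norm.1 hp)
  have hbound : ∀ x ∈ closedBall a ρ, ‖fderiv 𝕜 f x - fderiv 𝕜 f a‖ ≤ K * ρ := fun x hx ↦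
    ((hball x (hsub hx)).2).trans (by gcongr; exact mem_closedBall_iff_norm.1 hx)
  have hmvt := (convex_closedBall a ρ).norm_image_sub_le_of_norm_fderiv_le'
    (fun x hx ↦ (hball x (hsub hx)).1) hbound
    (mem_closedBall_iff_norm.2 (norm_snd_le (p - (a, a))))
    (mem_closedBall_iff_norm.2 (norm_fst_le (p - (a, a))))
  simpa [ρ, mul_assoc] using hmvt

lemma isBigO_sub_sub_smul_deriv {𝕜 F : Type*} [RCLike 𝕜] [NormedAddCommGroup F]
    [NormedSpace 𝕜 F] {f : 𝕜 → F} {a : 𝕜} (hf : ∀ᶠ x in 𝓝 a, DifferentiableAt 𝕜 f x)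
    (hf' : (fun x ↦ deriv f x - deriv f a) =O[𝓝 a] fun x ↦ x - a) :
    (fun p : 𝕜 × 𝕜 ↦ f p.1 - f p.2 - (p.1 - p.2) • deriv f a) =O[𝓝 (a, a)]
      fun p ↦ ‖p - (a, a)‖ * ‖p.1 - p.2‖ := by
  have hnorm (x : 𝕜) : ‖deriv f x - deriv f a‖ = ‖fderiv 𝕜 f x - fderiv 𝕜 f a‖ := by
    rw [← ContinuousLinearMap.norm_toSpanSingleton (𝕜 := 𝕜)]
    congr 1
    ext
    simp
  have hfderiv : (fun x ↦ fderiv 𝕜 f x - fderiv 𝕜 f a) =O[𝓝 a] fun x ↦ x - a :=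
    (hf'.norm_left.congr_left hnorm).of_norm_left
  simpa only [fderiv_eq_smul_deriv] using isBigO_sub_sub_fderiv hf hfderiv

section SteffensenMap

variable {𝕜 : Type*} [Field 𝕜]

/-- The divided difference `h` which replaces the derivative in Newton's iteration. Since
`x / 0 = 0`, it can only be nonzero at points where `g (f x) ≠ 0`. -/
def steffensenSlope (f g : 𝕜 → 𝕜) (x : 𝕜) : 𝕜 :=
  (f (x + g (f x)) - f x) / g (f x)

/-- The modified Steffensen iteration map `v`. It fixes every root of `f` whatever the value of
`steffensenSlope` there, so the extension by `v a = a` at a root `a` is built in. -/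
def steffensenStep (f g : 𝕜 → 𝕜) (x : 𝕜) : 𝕜 :=
  x - f x / steffensenSlope f g x

lemma steffensenStep_of_eq_zero {f g : 𝕜 → 𝕜} {a : 𝕜} (ha : f a = 0) :
    steffensenStep f g a = a := by
  simp [steffensenStep, ha]

end SteffensenMap

section SteffensenAsymptotics

variable {𝕜 : Type*} [NormedField 𝕜] {f g : 𝕜 → 𝕜} {a f' : 𝕜}

lemma isBigO_sub_sub_mul_sq
    (hf : (fun p : 𝕜 × 𝕜 ↦ f p.1 - f p.2 - (p.1 - p.2) * f') =O[𝓝 (a, a)]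
      fun p ↦ ‖p - (a, a)‖ * ‖p.1 - p.2‖) :
    (fun x ↦ f x - f a - (x - a) * f') =O[𝓝 a] fun x ↦ (x - a) ^ 2 := by
  have hpair : Tendsto (fun x ↦ (x, a)) (𝓝 a) (𝓝 (a, a)) :=
    tendsto_id.prodMk_nhds tendsto_const_nhds
  refine .of_norm_right ?_
  simpa [Function.comp_def, ← sq] using hf.comp_tendsto hpair

lemma isBigO_steffensenSlope_sub
    (hf : (fun p : 𝕜 × 𝕜 ↦ f p.1 - f p.2 - (p.1 - p.2) * f') =O[𝓝 (a, a)]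
      fun p ↦ ‖p - (a, a)‖ * ‖p.1 - p.2‖)
    (hgf : (fun x ↦ g (f x)) =O[𝓝 a] fun x ↦ x - a) (hgf₀ : ∀ᶠ x in 𝓝[≠] a, g (f x) ≠ 0) :
    (fun x ↦ steffensenSlope f g x - f') =O[𝓝[≠] a] fun x ↦ x - a := by
  have hsub : Tendsto (fun x ↦ x - a) (𝓝 a) (𝓝 0) := tendsto_sub_nhds_zero_iff.2 tendsto_id
  have hpair : Tendsto (fun x ↦ (x + g (f x), x)) (𝓝 a) (𝓝 (a, a)) := by
    simpa using (tendsto_id.add (hgf.trans_tendsto hsub)).prodMk_nhds tendsto_id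
  have hdist : (fun x ↦ (x + g (f x), x) - (a, a)) =O[𝓝 a] fun x ↦ x - a := by
    refine IsBigO.prod_left ?_ (isBigO_refl _ _)
    simpa [add_sub_right_comm] using (isBigO_refl (fun x ↦ x - a) (𝓝 a)).add hgf
  have hincr : (fun x ↦ f (x + g (f x)) - f x - g (f x) * f') =O[𝓝 a]
      fun x ↦ (x - a) * g (f x) := by
    have hcomp : (fun x ↦ f (x + g (f x)) - f x - g (f x) * f') =O[𝓝 a]
        fun x ↦ ‖(x + g (f x), x) - (a, a)‖ * ‖g (f x)‖ := by
      simpa only [Function.comp_def, add_sub_cancel_left] using hf.comp_tendsto hpair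
    exact hcomp.trans (hdist.norm_left.mul (isBigO_refl (fun x ↦ g (f x)) _).norm_left)
  refine ((hincr.mono nhdsWithin_le_nhds).mul (isBigO_refl (fun x ↦ (g (f x))⁻¹) _)).congr' ?_ ?_
  · filter_upwards [hgf₀] with x hx
    rw [steffensenSlope]
    field_simp
  · filter_upwards [hgf₀] with x hx
    field_simp

lemma tendsto_steffensenSlope
    (h : (fun x ↦ steffensenSlope f g x - f') =O[𝓝[≠] a] fun x ↦ x - a) :
    Tendsto (steffensenSlope f g) (𝓝[≠] a) (𝓝 f') :=
  tendsto_sub_nhds_zero_iff.1 <|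
    h.trans_tendsto ((tendsto_sub_nhds_zero_iff.2 tendsto_id).mono_left nhdsWithin_le_nhds)

lemma isBigO_steffensenStep_sub (ha : f a = 0) (hf'₀ : f' ≠ 0)
    (hf : (fun x ↦ f x - (x - a) * f') =O[𝓝 a] fun x ↦ (x - a) ^ 2)
    (hslope : (fun x ↦ steffensenSlope f g x - f') =O[𝓝[≠] a] fun x ↦ x - a) :
    (fun x ↦ steffensenStep f g x - a) =O[𝓝 a] fun x ↦ (x - a) ^ 2 := by
  have hlim := tendsto_steffensenSlope hslope
  have hnum : (fun x ↦ (steffensenSlope f g x - f') * (x - a) - (f x - (x - a) * f'))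
      =O[𝓝[≠] a] fun x ↦ (x - a) ^ 2 := by
    refine IsBigO.sub ?_ (hf.mono nhdsWithin_le_nhds)
    simpa only [sq] using hslope.mul (isBigO_refl (fun x ↦ x - a) _)
  have hpunctured : (fun x ↦ steffensenStep f g x - a) =O[𝓝[≠] a] fun x ↦ (x - a) ^ 2 := by
    refine (hnum.mul ((hlim.inv₀ hf'₀).isBigO_one 𝕜)).congr' ?_ (.of_forall fun x ↦ mul_one _)
    filter_upwards [hlim.eventually_ne hf'₀] with x hx
    rw [steffensenStep]
    field_simp
    ring
  rw [← nhdsNE_sup_pure a]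
  refine hpunctured.sup (isBigO_pure.2 fun _ ↦ ?_)
  rw [steffensenStep_of_eq_zero ha, sub_self]

end SteffensenAsymptotics

theorem modified_steffensen_local_quadratic_convergence_general {𝕜 : Type*} [RCLike 𝕜]
    {f g : 𝕜 → 𝕜} {a : 𝕜} (hf : ∀ᶠ x in 𝓝 a, DifferentiableAt 𝕜 f x)
    (hf_deriv : (fun x ↦ deriv f x - deriv f a) =O[𝓝 a] fun x ↦ x - a)
    (ha : f a = 0) (ha' : deriv f a ≠ 0)
    (hg : g =O[𝓝 0] fun y ↦ y) (hg₀ : ∀ᶠ y in 𝓝[≠] 0, g y ≠ 0) :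
    ∃ δ > 0, ∃ C > 0, (∀ x, ‖x - a‖ < δ → x ≠ a → steffensenSlope f g x ≠ 0) ∧
      ∀ u : ℕ → 𝕜, ‖u 0 - a‖ < δ → (∀ n, u (n + 1) = steffensenStep f g (u n)) →
        (∀ n, ‖u n - a‖ < δ) ∧ Tendsto u atTop (𝓝 a) ∧
        ∀ n, ‖u (n + 1) - a‖ ≤ C * ‖u n - a‖ ^ 2 := by
  have hderiv : HasDerivAt f (deriv f a) a := hf.self_of_nhds.hasDerivAt
  have hstrict := isBigO_sub_sub_smul_deriv hf hf_deriv
  have htaylor : (fun x ↦ f x - (x - a) * deriv f a) =O[𝓝 a] fun x ↦ (x - a) ^ 2 := by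
    simpa only [ha, sub_zero] using isBigO_sub_sub_mul_sq hstrict
  have hgf : (fun x ↦ g (f x)) =O[𝓝 a] fun x ↦ x - a := by
    have hlim : Tendsto f (𝓝 a) (𝓝 0) := ha ▸ hderiv.continuousAt
    have hfO : f =O[𝓝 a] fun x ↦ x - a := by simpa [ha] using hderiv.isBigO_sub
    exact (hg.comp_tendsto hlim).trans hfO
  have hgf₀ : ∀ᶠ x in 𝓝[≠] a, g (f x) ≠ 0 := (ha ▸ hderiv.tendsto_nhdsNE ha').eventually hg₀
  have hslope : (fun x ↦ steffensenSlope f g x - deriv f a) =O[𝓝[≠] a] fun x ↦ x - a :=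
    isBigO_steffensenSlope_sub hstrict hgf hgf₀
  have hslope₀ : ∀ᶠ x in 𝓝 a, x ≠ a → steffensenSlope f g x ≠ 0 :=
    eventually_nhdsWithin_iff.1 ((tendsto_steffensenSlope hslope).eventually_ne ha')
  obtain ⟨C, hC, horbit⟩ := exists_eventually_orbit_quadratic_convergence
    (by simpa using (isBigO_steffensenStep_sub ha ha' htaylor hslope).norm_right)
  have hball : ∀ᶠ δ : ℝ in 𝓝[>] 0, ball a δ ⊆ {x | x ≠ a → steffensenSlope f g x ≠ 0} :=
    nhdsWithin_le_nhds (eventually_ball_subset hslope₀)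
  obtain ⟨δ, horbit, hball, hδ⟩ := (horbit.and (hball.and self_mem_nhdsWithin)).exists
  exact ⟨δ, hδ, C, hC, fun x hx ↦ hball (mem_ball_iff_norm.2 hx), horbit⟩

/-- Local quadratic convergence of the modified Steffensen iteration:
with `v(x) = x - f x / h x`, `h(x) = (f (x + g (f x)) - f x) / g (f x)`,
extended by `v(x*) = x*`, there are `δ > 0` and `C > 0` such that every orbit
starting in the ball `|x₀ - x*| < δ` stays in the ball, converges to `x*` and
satisfies `|x_{n+1} - x*| ≤ C |x_n - x*|²`. -/
theorem modified_steffensen_local_quadratic_convergence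
    (f : ℝ → ℝ) (hf : ContDiff ℝ 2 f) (xs : ℝ)
    (hroot : f xs = 0) (hf' : deriv f xs ≠ 0)
    (g : ℝ → ℝ) (hg : ContDiff ℝ 1 g) (hg0 : g 0 = 0) (hg' : deriv g 0 ≠ 0) :
    ∃ δ > 0, ∃ C > 0, ∀ x₀ : ℝ, |x₀ - xs| < δ →
      ∀ seq : ℕ → ℝ, seq 0 = x₀ →
        (∀ n : ℕ, seq (n + 1) =
          if seq n = xs then xs
          else seq n - f (seq n) /
            ((f (seq n + g (f (seq n))) - f (seq n)) / g (f (seq n)))) →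
        (∀ n : ℕ, |seq n - xs| < δ) ∧
        Tendsto seq atTop (𝓝 xs) ∧
        (∀ n : ℕ, |seq (n + 1) - xs| ≤ C * |seq n - xs| ^ 2) := by
  have hf_deriv : DifferentiableAt ℝ (deriv f) xs :=
    (hf.deriv' (n := 1)).differentiable one_ne_zero xs
  have hg_deriv : HasDerivAt g (deriv g 0) 0 := (hg.differentiable one_ne_zero 0).hasDerivAt
  obtain ⟨δ, hδ, C, hC, -, horbit⟩ := modified_steffensen_local_quadratic_convergence_general
    (.of_forall (hf.differentiable two_ne_zero)) hf_deriv.isBigO_sub hroot hf'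
    (by simpa [hg0] using hg_deriv.isBigO_sub) (hg_deriv.eventually_ne hg')
  refine ⟨δ, hδ, C, hC, fun x₀ hx₀ seq h₀ hseq ↦ horbit seq (h₀ ▸ hx₀) fun n ↦ ?_⟩
  rw [hseq n]
  split_ifs with hn
  · rw [hn, steffensenStep_of_eq_zero hroot]
  · rfl
end

section
/- Let f : ℝ → ℝ be twice continuously differentiable and let x* be a simple root of f (i.e. f(x*) = 0 and f'(x*) ≠ 0). Then the classical Steffensen iteration map v(x) = x − f(x)² / (f(x + f(x)) − f(x)) is locally quadratically accurate: there exist constants C > 0 and δ > 0 such that for all x with 0 < |x − x*| < δ, the denominator f(x + f(x)) − f(x) is nonzero and |v(x) − x*| ≤ C |x − x*|². -/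
open Filter Topology

open Asymptotics Metric

/-! Put `a = f' x*`, `e = x - x*` and `D = f (x + f x) - f x`. The error of one step is
`(e * (D - a * f x) - f x * (f x - a * e)) / D`, and both brackets are remainders of linear
approximations of `f` near `x*`: a Lipschitz bound on `f'` at `x*` makes the first `O(e * f x)`
and the second `O(e ^ 2)`. The numerator is thus `O(e ^ 2 * f x)`, while `D` is comparable
to `f x`. -/

/-- `f` has derivative `f'` at `x`, with the two-point remainder `f y - f z - (y - z) • f'` of order
`‖(y, z) - (x, x)‖ * ‖y - z‖` as `(y, z) → (x, x)`. This sharpens `HasStrictDerivAt`, whose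
remainder is only `o(y - z)`. -/
def HasQuadraticStrictDerivAt {𝕜 F : Type*} [NontriviallyNormedField 𝕜] [NormedAddCommGroup F]
    [NormedSpace 𝕜 F] (f : 𝕜 → F) (f' : F) (x : 𝕜) : Prop :=
  (fun p : 𝕜 × 𝕜 ↦ f p.1 - f p.2 - (p.1 - p.2) • f') =O[𝓝 (x, x)]
    fun p ↦ ‖p - (x, x)‖ * ‖p.1 - p.2‖

/-- The classical Steffensen iteration map. Where the denominator vanishes it takes the value `x`,
since `y / 0 = 0`. -/
def steffensenMap {𝕜 : Type*} [Field 𝕜] (f : 𝕜 → 𝕜) (x : 𝕜) : 𝕜 :=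
  x - f x ^ 2 / (f (x + f x) - f x)

theorem steffensenMap_sub_eq {𝕜 : Type*} [Field 𝕜] {f : 𝕜 → 𝕜} {x : 𝕜}
    (hx : f (x + f x) - f x ≠ 0) (a r : 𝕜) :
    steffensenMap f x - r =
      ((x - r) * (f (x + f x) - f x - f x * a) - f x * (f x - (x - r) * a)) /
        (f (x + f x) - f x) := by
  rw [steffensenMap, eq_div_iff hx, sub_right_comm, sub_mul, div_mul_cancel₀ _ hx]
  ring

section MeanValue

variable {𝕜 F : Type*} [RCLike 𝕜] [NormedAddCommGroup F] [NormedSpace 𝕜 F]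
  {f : 𝕜 → F} {x : 𝕜}

theorem norm_sub_sub_smul_le_of_norm_deriv_sub_le {s : Set 𝕜} {C : ℝ} {f' : F} {y z : 𝕜}
    (hs : Convex ℝ s) (hf : ∀ u ∈ s, DifferentiableAt 𝕜 f u)
    (hbound : ∀ u ∈ s, ‖deriv f u - f'‖ ≤ C) (hy : y ∈ s) (hz : z ∈ s) :
    ‖f y - f z - (y - z) • f'‖ ≤ C * ‖y - z‖ := by
  have hderiv (u : 𝕜) (hu : u ∈ s) :
      HasDerivWithinAt (fun v ↦ f v - v • f') (deriv f u - f') s u := by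
    have hline : HasDerivAt (fun v : 𝕜 ↦ v • f') f' u := by
      simpa using (hasDerivAt_id u).smul_const f'
    exact ((hf u hu).hasDerivAt.fun_sub hline).hasDerivWithinAt
  calc ‖f y - f z - (y - z) • f'‖ = ‖(f y - y • f') - (f z - z • f')‖ := by
        rw [sub_smul, sub_sub_sub_comm]
    _ ≤ C * ‖y - z‖ := hs.norm_image_sub_le_of_norm_hasDerivWithin_le hderiv hbound hz hy

theorem hasQuadraticStrictDerivAt_of_isBigO_deriv_sub
    (hf : ∀ᶠ u in 𝓝 x, DifferentiableAt 𝕜 f u)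
    (hlip : (deriv f · - deriv f x) =O[𝓝 x] (· - x)) :
    HasQuadraticStrictDerivAt f (deriv f x) x := by
  obtain ⟨K, hK, hbound⟩ := hlip.exists_pos
  obtain ⟨r, hr, hball⟩ := eventually_nhds_iff_ball.1 (hf.and hbound.bound)
  refine .of_bound K ?_
  filter_upwards [ball_mem_nhds (x, x) hr] with p hp
  have hsub : closedBall x ‖p - (x, x)‖ ⊆ ball x r :=
    closedBall_subset_ball (mem_ball_iff_norm.1 hp)
  have hmvt : ‖f p.1 - f p.2 - (p.1 - p.2) • deriv f x‖ ≤ K * ‖p - (x, x)‖ * ‖p.1 - p.2‖ := by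
    refine norm_sub_sub_smul_le_of_norm_deriv_sub_le (convex_closedBall x ‖p - (x, x)‖)
      (fun u hu ↦ (hball u (hsub hu)).1) (fun u hu ↦ ?_)
      (mem_closedBall_iff_norm.2 (norm_fst_le (p - (x, x))))
      (mem_closedBall_iff_norm.2 (norm_snd_le (p - (x, x))))
    calc ‖deriv f u - deriv f x‖ ≤ K * ‖u - x‖ := (hball u (hsub hu)).2
      _ ≤ K * ‖p - (x, x)‖ := by gcongr; exact mem_closedBall_iff_norm.1 hu
  simpa [mul_assoc] using hmvt

end MeanValue

theorem eventually_differentiableAt_of_continuousAt_deriv {𝕜 F : Type*}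
    [NontriviallyNormedField 𝕜] [NormedAddCommGroup F] [NormedSpace 𝕜 F] {f : 𝕜 → F} {x : 𝕜}
    (hcont : ContinuousAt (deriv f) x) (hne : deriv f x ≠ 0) :
    ∀ᶠ u in 𝓝 x, DifferentiableAt 𝕜 f u :=
  (hcont.eventually_ne hne).mono fun _ ↦ differentiableAt_of_deriv_ne_zero

namespace HasQuadraticStrictDerivAt

variable {𝕜 F : Type*} [NontriviallyNormedField 𝕜] [NormedAddCommGroup F] [NormedSpace 𝕜 F]
  {f : 𝕜 → F} {f' : F} {x : 𝕜}

theorem hasStrictDerivAt (h : HasQuadraticStrictDerivAt f f' x) : HasStrictDerivAt f f' x := by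
  have hdist : Tendsto (fun p : 𝕜 × 𝕜 ↦ ‖p - (x, x)‖) (𝓝 (x, x)) (𝓝 0) :=
    tendsto_norm_sub_self (x, x)
  have hsmall : (fun p : 𝕜 × 𝕜 ↦ ‖p - (x, x)‖ * ‖p.1 - p.2‖) =o[𝓝 (x, x)]
      fun p ↦ p.1 - p.2 := by
    simpa using ((isLittleO_one_iff ℝ).2 hdist).mul_isBigO
      (isBigO_refl (fun p : 𝕜 × 𝕜 ↦ ‖p.1 - p.2‖) _)
  exact .of_isLittleO (h.trans_isLittleO hsmall)

theorem isBigO_sub_sub_smul {α : Type*} {l : Filter α} {y z e : α → 𝕜}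
    (h : HasQuadraticStrictDerivAt f f' x) (hy : (y · - x) =O[l] e) (hz : (z · - x) =O[l] e)
    (he : Tendsto e l (𝓝 0)) :
    (fun t ↦ f (y t) - f (z t) - (y t - z t) • f') =O[l] fun t ↦ e t * (y t - z t) := by
  have hyx : Tendsto y l (𝓝 x) := tendsto_sub_nhds_zero_iff.1 (hy.trans_tendsto he)
  have hzx : Tendsto z l (𝓝 x) := tendsto_sub_nhds_zero_iff.1 (hz.trans_tendsto he)
  have hdist : (fun t ↦ ‖(y t, z t) - (x, x)‖) =O[l] e := (hy.prod_left hz).norm_left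
  exact (h.comp_tendsto (hyx.prodMk_nhds hzx)).trans
    (hdist.mul (isBigO_refl (fun t ↦ y t - z t) l).norm_left)

end HasQuadraticStrictDerivAt

theorem isTheta_sub_of_hasDerivAtFilter {𝕜 F α : Type*} [NontriviallyNormedField 𝕜]
    [NormedAddCommGroup F] [NormedSpace 𝕜 F] {f : 𝕜 → F} {f' : F} {L : Filter (𝕜 × 𝕜)}
    {l : Filter α} {y z : α → 𝕜} (hf : HasDerivAtFilter f f' L) (hf' : f' ≠ 0)
    (hyz : Tendsto (fun t ↦ (y t, z t)) l L) :
    (fun t ↦ f (y t) - f (z t)) =Θ[l] fun t ↦ y t - z t :=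
  have hpair := hf.isTheta_sub hf'
  ⟨hpair.1.comp_tendsto hyz, hpair.2.comp_tendsto hyz⟩

section Steffensen

variable {𝕜 : Type*} [NontriviallyNormedField 𝕜] {f : 𝕜 → 𝕜} {a r : 𝕜}

theorem isTheta_sub_root (hf : HasDerivAt f a r) (hr : f r = 0) (ha : a ≠ 0) :
    f =Θ[𝓝 r] (· - r) := by
  have hpair : Tendsto (fun x ↦ (x, r)) (𝓝 r) (𝓝 r ×ˢ pure r) :=
    tendsto_id.prodMk tendsto_const_pure
  simpa only [hr, sub_zero] using isTheta_sub_of_hasDerivAtFilter hf ha hpair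

theorem steffensen_denominator_isTheta (hf : HasStrictDerivAt f a r) (hr : f r = 0) (ha : a ≠ 0) :
    (fun x ↦ f (x + f x) - f x) =Θ[𝓝 r] f := by
  have hshift : Tendsto (fun x ↦ x + f x) (𝓝 r) (𝓝 r) := by
    simpa only [id_eq, hr, add_zero] using tendsto_id.add hf.hasDerivAt.continuousAt.tendsto
  simpa only [id_eq, add_sub_cancel_left] using
    isTheta_sub_of_hasDerivAtFilter hf ha (hshift.prodMk_nhds tendsto_id)

theorem eventually_steffensen_denominator_ne_zero (hf : HasStrictDerivAt f a r) (hr : f r = 0)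
    (ha : a ≠ 0) : ∀ᶠ x in 𝓝[≠] r, f (x + f x) - f x ≠ 0 := by
  have hrev : (· - r) =O[𝓝 r] fun x ↦ f (x + f x) - f x :=
    ((steffensen_denominator_isTheta hf hr ha).trans (isTheta_sub_root hf.hasDerivAt hr ha)).2
  filter_upwards [hrev.eq_zero_imp.filter_mono nhdsWithin_le_nhds, self_mem_nhdsWithin]
    with x himp hx hzero
  exact hx (sub_eq_zero.1 (himp hzero))

theorem steffensen_numerator_isBigO (hf : HasQuadraticStrictDerivAt f a r) (hr : f r = 0) :
    (fun x ↦ (x - r) * (f (x + f x) - f x - f x * a) - f x * (f x - (x - r) * a)) =O[𝓝 r]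
      fun x ↦ (x - r) ^ 2 * f x := by
  have herr : Tendsto (· - r) (𝓝 r) (𝓝 0) := tendsto_sub_nhds_zero_iff.2 tendsto_id
  have hself : (· - r) =O[𝓝 r] (· - r) := isBigO_refl _ _
  have hshift : (fun x ↦ x + f x - r) =O[𝓝 r] (· - r) := by
    simpa only [add_sub_right_comm, hr, sub_zero] using
      hself.add hf.hasStrictDerivAt.hasDerivAt.isBigO_sub
  have hroot : (fun x ↦ f x - (x - r) * a) =O[𝓝 r] fun x ↦ (x - r) * (x - r) := by
    simpa only [hr, sub_zero, smul_eq_mul] using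
      hf.isBigO_sub_sub_smul (z := fun _ ↦ r) hself (by simpa using isBigO_zero _ _) herr
  have hdiff : (fun x ↦ f (x + f x) - f x - f x * a) =O[𝓝 r] fun x ↦ (x - r) * f x := by
    simpa only [add_sub_cancel_left, smul_eq_mul] using hf.isBigO_sub_sub_smul hshift hself herr
  refine .sub ((hself.mul hdiff).congr_right fun x ↦ ?_)
    (((isBigO_refl f _).mul hroot).congr_right fun x ↦ ?_) <;> ring

theorem steffensenMap_sub_isBigO (hf : HasQuadraticStrictDerivAt f a r) (hr : f r = 0)
    (ha : a ≠ 0) : (steffensenMap f · - r) =O[𝓝[≠] r] fun x ↦ (x - r) ^ 2 := by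
  have hne := eventually_steffensen_denominator_ne_zero hf.hasStrictDerivAt hr ha
  have hnum : (fun x ↦ (x - r) * (f (x + f x) - f x - f x * a) - f x * (f x - (x - r) * a))
      =O[𝓝[≠] r] fun x ↦ (x - r) ^ 2 * (f (x + f x) - f x) :=
    ((steffensen_numerator_isBigO hf hr).trans ((isBigO_refl _ _).mul
      (steffensen_denominator_isTheta hf.hasStrictDerivAt hr ha).2)).mono nhdsWithin_le_nhds
  refine (hnum.mul (isBigO_refl (fun x ↦ (f (x + f x) - f x)⁻¹) _)).congr' ?_ ?_
  · filter_upwards [hne] with x hx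
    rw [steffensenMap_sub_eq hx a r, div_eq_mul_inv]
  · filter_upwards [hne] with x hx
    exact mul_inv_cancel_right₀ hx _

end Steffensen

theorem classical_steffensen_locally_quadratic_general {𝕜 : Type*} [RCLike 𝕜] {f : 𝕜 → 𝕜} {r : 𝕜}
    (hlip : (deriv f · - deriv f r) =O[𝓝 r] (· - r)) (hr : f r = 0) (hf' : deriv f r ≠ 0) :
    ∃ C > 0, ∃ δ > 0, ∀ x : 𝕜, 0 < ‖x - r‖ → ‖x - r‖ < δ →
      f (x + f x) - f x ≠ 0 ∧ ‖steffensenMap f x - r‖ ≤ C * ‖x - r‖ ^ 2 := by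
  have hcont : ContinuousAt (deriv f) r := tendsto_sub_nhds_zero_iff.1
    (hlip.trans_tendsto (tendsto_sub_nhds_zero_iff.2 tendsto_id))
  have hquad : HasQuadraticStrictDerivAt f (deriv f r) r :=
    hasQuadraticStrictDerivAt_of_isBigO_deriv_sub
      (eventually_differentiableAt_of_continuousAt_deriv hcont hf') hlip
  have hne := eventually_steffensen_denominator_ne_zero hquad.hasStrictDerivAt hr hf'
  obtain ⟨C, hC, hbound⟩ := (steffensenMap_sub_isBigO hquad hr hf').exists_pos
  obtain ⟨δ, hδ, hball⟩ :=
    eventually_nhds_iff_ball.1 (eventually_nhdsWithin_iff.1 (hne.and hbound.bound))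
  refine ⟨C, hC, δ, hδ, fun x hpos hlt ↦ ?_⟩
  simpa only [norm_pow] using
    hball x (mem_ball_iff_norm.2 hlt) (sub_ne_zero.1 (norm_pos_iff.1 hpos))

/-- The classical Steffensen iteration map
`v(x) = x - (f x)² / (f (x + f x) - f x)` is locally quadratically accurate
near a simple root `x*`: on a punctured ball around `x*` the denominator is
nonzero and `|v x - x*| ≤ C |x - x*|²`. -/
theorem classical_steffensen_locally_quadratic
    (f : ℝ → ℝ) (hf : ContDiff ℝ 2 f) (xs : ℝ)
    (hroot : f xs = 0) (hf' : deriv f xs ≠ 0) :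
    ∃ C > 0, ∃ δ > 0, ∀ x : ℝ, 0 < |x - xs| → |x - xs| < δ →
      f (x + f x) - f x ≠ 0 ∧
      |(x - (f x) ^ 2 / (f (x + f x) - f x)) - xs| ≤ C * |x - xs| ^ 2 :=
  classical_steffensen_locally_quadratic_general (hf.differentiable_deriv_two xs).isBigO_sub
    hroot hf'
end
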